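/- Let n ≥ 3 and for each j ∈ {1,…,n−1} let (f^j_l)_{l∈ℕ} be a sequence of polynomials in ℝ[x₁,…,x_{n−1}] satisfying the recursion f^j_{l+2} = −Δ_{n−1}(f^j_l) for all l ≥ 0, where Δ_{n−1} = ∑_{p=1}^{n−1} ∂²_{x_p}. Then the system [(a) ∑_{j=1}^{n−1} x_j f^j_0 = 0, and (b) ∑_{j=1}^{n−1} x_j f^j_{l+3}/(l+3) = −∑_{j=1}^{n−1} Δ_{n−1}(x_j f^j_{l+1}/(l+1)) for all l ≥ 0] holds if and only if the system [(a) ∑_{j=1}^{n−1} x_j f^j_0 = 0, and (b') ∑_{j=1}^{n−1} ∂_{x_j}(f^j_1) = −Δ_{n−1}(∑_{j=1}^{n−1} x_j f^j_1)] holds. -/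

import Mathlib

open MvPolynomial

/-- The Laplacian `Δ_{n−1} = ∑_{p=1}^{n−1} ∂²_{x_p}` on `ℝ[x₁,…,x_{n−1}]`. -/
noncomputable def lapNm1 {m : ℕ} (p : MvPolynomial (Fin m) ℝ) : MvPolynomial (Fin m) ℝ :=
  ∑ r : Fin m, pderiv r (pderiv r p)

section Laplacian

variable {m : ℕ}

theorem lapNm1_smul (c : ℝ) (p : MvPolynomial (Fin m) ℝ) : lapNm1 (c • p) = c • lapNm1 p := by
  simp [lapNm1, Finset.smul_sum]

theorem lapNm1_zero : lapNm1 (0 : MvPolynomial (Fin m) ℝ) = 0 := by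
  simp [lapNm1]

theorem lapNm1_sum {ι : Type*} (s : Finset ι) (g : ι → MvPolynomial (Fin m) ℝ) :
    lapNm1 (∑ j ∈ s, g j) = ∑ j ∈ s, lapNm1 (g j) := by
  simp only [lapNm1, map_sum]
  exact Finset.sum_comm

theorem pderiv_pderiv_comm (i j : Fin m) (p : MvPolynomial (Fin m) ℝ) :
    pderiv i (pderiv j p) = pderiv j (pderiv i p) := by
  have h : ⁅pderiv (R := ℝ) i, pderiv (R := ℝ) j⁆ = 0 := by
    apply MvPolynomial.derivation_ext
    intro k
    simp [Derivation.commutator_apply, pderiv_X, Pi.single_apply, apply_ite]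
  have h' := congrArg (fun d => d p) h
  simpa [Derivation.commutator_apply, sub_eq_zero] using h'

theorem lapNm1_pderiv (j : Fin m) (p : MvPolynomial (Fin m) ℝ) :
    lapNm1 (pderiv j p) = pderiv j (lapNm1 p) := by
  simp only [lapNm1, map_sum]
  refine Finset.sum_congr rfl fun r _ => ?_
  rw [pderiv_pderiv_comm r j p, pderiv_pderiv_comm r j]

theorem lapNm1_X_mul (j : Fin m) (p : MvPolynomial (Fin m) ℝ) :
    lapNm1 (X j * p) = (2 : ℝ) • pderiv j p + X j * lapNm1 p := by
  have h : ∀ r : Fin m, pderiv r (pderiv r (X j * p)) =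
      (if r = j then (2 : ℝ) • pderiv j p else 0) + X j * pderiv r (pderiv r p) := by
    intro r
    by_cases hr : r = j
    · subst hr
      simp only [Derivation.leibniz, map_add, pderiv_X_self, smul_eq_mul, mul_one, if_true,
        two_smul]
      ring
    · simp [Derivation.leibniz, pderiv_X_of_ne (Ne.symm hr), hr]
  simp only [lapNm1, h, Finset.sum_add_distrib, Finset.mul_sum]
  simp

variable {f : Fin m → ℕ → MvPolynomial (Fin m) ℝ}

/-- The Laplacian of `∑ⱼ xⱼ f^j_l` in terms of the divergence of `f_l` and `∑ⱼ xⱼ f^j_{l+2}`. -/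
theorem lapNm1_sum_X_mul (hrec : ∀ j l, f j (l + 2) = -lapNm1 (f j l)) (l : ℕ) :
    lapNm1 (∑ j, X j * f j l) = (2 : ℝ) • ∑ j, pderiv j (f j l) - ∑ j, X j * f j (l + 2) := by
  simp [lapNm1_sum, lapNm1_X_mul, hrec, Finset.sum_add_distrib, Finset.smul_sum]

theorem lapNm1_sum_pderiv (hrec : ∀ j l, f j (l + 2) = -lapNm1 (f j l)) (l : ℕ) :
    lapNm1 (∑ j, pderiv j (f j l)) = -∑ j, pderiv j (f j (l + 2)) := by
  simp [lapNm1_sum, lapNm1_pderiv, hrec]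

theorem sum_X_mul_add_four (hrec : ∀ j l, f j (l + 2) = -lapNm1 (f j l)) (l : ℕ)
    (h : ∑ j, X j * f j (l + 2) = ((l : ℝ) + 2) • ∑ j, pderiv j (f j l)) :
    ∑ j, X j * f j (l + 4) = ((l : ℝ) + 4) • ∑ j, pderiv j (f j (l + 2)) := by
  have h₁ := lapNm1_sum_X_mul hrec (l + 2)
  rw [h, lapNm1_smul, lapNm1_sum_pderiv hrec] at h₁
  linear_combination (norm := module) h₁

/-- Each equation of the first system says that `∑ⱼ xⱼ f^j_{l+3}` is `l + 3` times the divergence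
of `f_{l+1}`. -/
theorem sum_X_mul_recursion_iff (hrec : ∀ j l, f j (l + 2) = -lapNm1 (f j l)) (l : ℕ) :
    (∑ j, ((l : ℝ) + 3)⁻¹ • (X j * f j (l + 3)) =
        -∑ j, lapNm1 (((l : ℝ) + 1)⁻¹ • (X j * f j (l + 1)))) ↔
      ∑ j, X j * f j (l + 3) = ((l : ℝ) + 3) • ∑ j, pderiv j (f j (l + 1)) := by
  have h₁ := lapNm1_sum_X_mul hrec (l + 1)
  have h3 : (l : ℝ) + 3 ≠ 0 := by positivity
  have h1 : (l : ℝ) + 1 ≠ 0 := by positivity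
  simp only [lapNm1_smul, ← Finset.smul_sum, ← lapNm1_sum]
  rw [h₁]
  generalize ∑ j, pderiv j (f j (l + 1)) = D
  change _ • _ = -(_ • (_ - ∑ j, X j * f j (l + 3))) ↔ _
  generalize ∑ j, X j * f j (l + 3) = S
  constructor
  · intro h
    have h' := congrArg (fun p => (((l : ℝ) + 3) * ((l : ℝ) + 1) / 2) • p) h
    linear_combination (norm := skip) -h'
    match_scalars <;> field_simp <;> ring
  · rintro rfl
    match_scalars
    field_simp
    ring

end Laplacian

/-- for sequences `f^j_l` in `ℝ[x₁,…,x_{n−1}]` satisfying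
`f^j_{l+2} = −Δ_{n−1}(f^j_l)`, the system
`(a) ∑ⱼ xⱼ f^j₀ = 0` and `(b) ∑ⱼ xⱼ f^j_{l+3}/(l+3) = −∑ⱼ Δ_{n−1}(xⱼ f^j_{l+1}/(l+1))`
(for all `l ≥ 0`) is equivalent to the system
`(a) ∑ⱼ xⱼ f^j₀ = 0` and `(b') ∑ⱼ ∂_{xⱼ}(f^j₁) = −Δ_{n−1}(∑ⱼ xⱼ f^j₁)`. -/
theorem system_equivalence (n : ℕ) (hn : 3 ≤ n)
    (f : Fin (n - 1) → ℕ → MvPolynomial (Fin (n - 1)) ℝ)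
    (hrec : ∀ j l, f j (l + 2) = -lapNm1 (f j l)) :
    (((∑ j : Fin (n - 1), X j * f j 0) = 0) ∧
      (∀ l : ℕ, (∑ j : Fin (n - 1), ((l : ℝ) + 3)⁻¹ • (X j * f j (l + 3))) =
        -(∑ j : Fin (n - 1), lapNm1 (((l : ℝ) + 1)⁻¹ • (X j * f j (l + 1)))))) ↔
    (((∑ j : Fin (n - 1), X j * f j 0) = 0) ∧
      ((∑ j : Fin (n - 1), pderiv j (f j 1)) =
        -lapNm1 (∑ j : Fin (n - 1), X j * f j 1))) := by
  refine and_congr_right fun h0 => ?_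
  simp only [sum_X_mul_recursion_iff hrec]
  have hone : ((∑ j, pderiv j (f j 1)) = -lapNm1 (∑ j, X j * f j 1)) ↔
      ∑ j, X j * f j 3 = (3 : ℝ) • ∑ j, pderiv j (f j 1) := by
    rw [lapNm1_sum_X_mul hrec 1]
    constructor <;> intro h <;> linear_combination (norm := module) -h
  rw [hone]
  constructor
  · intro h
    simpa using h 0
  · intro h3
    have h2 : ∑ j, X j * f j 2 = (2 : ℝ) • ∑ j, pderiv j (f j 0) := by
      have h := lapNm1_sum_X_mul hrec 0
      rw [h0, lapNm1_zero] at h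
      exact (sub_eq_zero.mp h.symm).symm
    have key : ∀ l : ℕ, ∑ j, X j * f j (l + 2) = ((l : ℝ) + 2) • ∑ j, pderiv j (f j l) := by
      intro l
      induction l using Nat.twoStepInduction with
      | zero => simpa using h2
      | one => norm_num; exact h3
      | more l ih _ =>
        have h := sum_X_mul_add_four hrec l ih
        push_cast
        rw [add_assoc (l : ℝ)]
        norm_num
        exact h
    intro l
    have h := key (l + 1)
    push_cast at h
    rw [add_assoc (l : ℝ)] at h
    norm_num at h
    exact h
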